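/- For every integer k ≥ 2 there exist ε₀ > 0, c > 0 and λ₀ ≥ 1 such that for every 0 < ε ≤ ε₀, every λ ≥ λ₀, every θ ∈ [0, 1/100], every w ∈ [1/4, 3/4], and every x ∈ Ω(θ, w; λ, ε), one has |∫_{[0,1]²} e(P(ξ; x)) dξ| ≥ c/λ. -/

import Mathlib

open MeasureTheory Real Set
open scoped ENNReal

noncomputable section

/-- Index set for multi-indices `β = (β₁, β₂) ∈ ℕ²` with `1 ≤ β₁ + β₂ ≤ k`;
its cardinality is `N = (k+1)(k+2)/2 − 1`. -/
def Idx (k : ℕ) : Type :=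
  {β : Fin (k + 1) × Fin (k + 1) // 1 ≤ (β.1 : ℕ) + (β.2 : ℕ) ∧ (β.1 : ℕ) + (β.2 : ℕ) ≤ k}

instance (k : ℕ) : Fintype (Idx k) := by unfold Idx; infer_instance

/-- The phase polynomial `P(ξ; x) = ∑_{1 ≤ |β| ≤ k} x_β ξ₁^{β₁} ξ₂^{β₂}`. -/
def Pphase (k : ℕ) (x : Idx k → ℝ) (ξ : Fin 2 → ℝ) : ℝ :=
  ∑ β : Idx k, x β * ξ 0 ^ (β.1.1 : ℕ) * ξ 1 ^ (β.1.2 : ℕ)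

/-- `E_k1(x) = ∫_{[0,1]²} e(P(ξ; x)) dξ` with `e(t) = exp(2πit)`. -/
def Eone (k : ℕ) (x : Idx k → ℝ) : ℂ :=
  ∫ ξ in Icc (0 : Fin 2 → ℝ) 1, Complex.exp (2 * Real.pi * Complex.I * (Pphase k x ξ))

/-- The index `β = (k, 0)`, so that `x₁ = x_{(k,0)}` is the coefficient of `ξ₁^k`. -/
def idxTop (k : ℕ) (hk : 1 ≤ k) : Idx k :=
  ⟨(⟨k, Nat.lt_succ_self k⟩, ⟨0, Nat.succ_pos k⟩), by constructor <;> simp [hk]⟩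

/-- `γ_{k′}(·; x, θ, w)`: the coefficient of `u^{k′}` in the polynomial
`u ↦ P(u − θξ₂ + w, ξ₂; x)`, as a polynomial in `ξ₂` (of degree ≤ k − k′);
equivalently, `P(ξ₁, ξ₂; x) = Σ_{k′=0}^{k} γ_{k′}(ξ₂; x, θ, w) (ξ₁ + θξ₂ − w)^{k′}`.
We work in `ℝ[S][U]`, with `U` the outer variable (standing for `ξ₁ + θξ₂ − w`)
and `S` the inner one (standing for `ξ₂`). -/
def gam (k : ℕ) (x : Idx k → ℝ) (θ w : ℝ) (k' : ℕ) : Polynomial ℝ :=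
  Polynomial.coeff
    (∑ β : Idx k, Polynomial.C (Polynomial.C (x β)) *
      (Polynomial.X - Polynomial.C (Polynomial.C θ * Polynomial.X - Polynomial.C w))
          ^ (β.1.1 : ℕ) *
      Polynomial.C (Polynomial.X ^ (β.1.2 : ℕ)))
    k'

/-- `‖γ‖`, the sum of the absolute values of the coefficients of a real polynomial. -/
def norm1 (γ : Polynomial ℝ) : ℝ := ∑ i ∈ γ.support, |γ.coeff i|

/-- The set `Ω(θ, w; λ, ε)` of (6.4):
`{x : λ^k ≤ x₁ ≤ (2λ)^k, ‖γ_{k′}(·;x,θ,w)‖ ≤ ε λ^{k′} (1 ≤ k′ ≤ k−1),`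
`‖γ₀(·;x,θ,w) − γ₀(0;x,θ,w)‖ ≤ ε}`. -/
def Omegaset (k : ℕ) (hk : 1 ≤ k) (θ w lam ε : ℝ) : Set (Idx k → ℝ) :=
  {x | lam ^ k ≤ x (idxTop k hk) ∧ x (idxTop k hk) ≤ (2 * lam) ^ k ∧
    (∀ k' : ℕ, 1 ≤ k' → k' ≤ k - 1 → norm1 (gam k x θ w k') ≤ ε * lam ^ k') ∧
    norm1 (gam k x θ w 0 -
      Polynomial.C (Polynomial.eval 0 (gam k x θ w 0))) ≤ ε}

/-!
On the horizontal line `ξ₂ = y` substitute `v = L (ξ₁ + θ y - w)`, where `L ^ k = x₁`. For `x ∈ Ω`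
the phase becomes `γ₀(0) + v ^ k + r(v)`, where `r` has degree `< k` and coefficients at most `ε`,
and `v` runs over an interval around `0` reaching a distance comparable to `λ` on both sides.
So the slice equals `L⁻¹ e(γ₀(0)) ∫ e(v ^ k + r(v))`, and since `γ₀(0)` does not depend on `y`, the
slices cannot cancel as soon as the last integral has real part bounded below.

For that integral, the tails `|v| ≥ V` are `O(1 / V)` by van der Corput's lemma, dropping `r` on
`[-V, V]` costs `O(ε V ^ (k + 1))`, and two integrations by parts show that `∫₀^V cos(2π s ^ k) ds`
is a boundary term `≥ -1 / V` plus a positive multiple of `∫₀^V sinc(π s ^ k)² ds`.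
-/

open Polynomial (C X derivative)
open scoped FourierTransform Polynomial

/-! ### The integral of `cos (2π s ^ k)` -/

lemma hasDerivAt_sinc_mul_pow {c s : ℝ} (hc : c ≠ 0) (hs : s ≠ 0) (k : ℕ) :
    HasDerivAt (fun t => sinc (c * t ^ k))
      (k * (cos (c * s ^ k) - sinc (c * s ^ k)) / s) s := by
  have hx : c * s ^ k ≠ 0 := by positivity
  have hpow : HasDerivAt (fun t : ℝ => c * t ^ k) (c * (k * s ^ k / s)) s := by
    refine ((hasDerivAt_pow k s).const_mul c).congr_deriv ?_
    rcases k with _ | k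
    · simp
    · simp only [Nat.add_sub_cancel, pow_succ]
      field_simp
  have hquot := hpow.sin.div hpow hx
  have hsinc : (fun t => sinc (c * t ^ k)) =ᶠ[nhds s]
      fun t => sin (c * t ^ k) / (c * t ^ k) := by
    filter_upwards [hpow.continuousAt.eventually_ne hx] with t ht using sinc_of_ne_zero ht
  refine (hquot.congr_of_eventuallyEq hsinc).congr_deriv ?_
  rw [sinc_of_ne_zero hx]
  field_simp

/-- The boundary term left after integrating `cos (2π s ^ k)` by parts twice, written with `sinc`
so that it is continuous at `s = 0`. -/
def cosPowBoundary (k : ℕ) (s : ℝ) : ℝ :=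
  s * (sinc (2 * π * s ^ k) / k + (k - 1) / (2 * k ^ 2) * sinc (π * s ^ k) ^ 2)

lemma continuous_cosPowBoundary (k : ℕ) : Continuous (cosPowBoundary k) := by
  unfold cosPowBoundary
  fun_prop

lemma sinc_two_mul (x : ℝ) : sinc (2 * x) = sinc x * cos x := by
  rcases eq_or_ne x 0 with rfl | hx
  · simp
  · rw [sinc_of_ne_zero hx, sinc_of_ne_zero (by positivity), sin_two_mul]
    field_simp

lemma hasDerivAt_cosPowBoundary {k : ℕ} (hk : k ≠ 0) {s : ℝ} (hs : s ≠ 0) :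
    HasDerivAt (cosPowBoundary k)
      (cos (2 * π * s ^ k) - (k - 1) * (2 * k - 1) / (2 * k ^ 2) * sinc (π * s ^ k) ^ 2) s := by
  have hfirst := (hasDerivAt_sinc_mul_pow two_pi_pos.ne' hs k).div_const (k : ℝ)
  have hsecond := ((hasDerivAt_sinc_mul_pow pi_ne_zero hs k).pow 2).const_mul
    (((k : ℝ) - 1) / (2 * k ^ 2))
  refine ((hasDerivAt_id s).mul (hfirst.add hsecond)).congr_deriv ?_
  have hdouble : sinc (2 * π * s ^ k) = sinc (π * s ^ k) * cos (π * s ^ k) := by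
    rw [mul_assoc, sinc_two_mul]
  simp only [hdouble, id, Pi.add_apply, Pi.pow_apply]
  field_simp
  ring

lemma integral_cos_pow_eq {k : ℕ} (hk : k ≠ 0) {V : ℝ} (hV : 0 ≤ V) :
    ∫ s in (0 : ℝ)..V, cos (2 * π * s ^ k) = cosPowBoundary k V +
      (k - 1) * (2 * k - 1) / (2 * k ^ 2) * ∫ s in (0 : ℝ)..V, sinc (π * s ^ k) ^ 2 := by
  have hcos : Continuous fun s : ℝ => cos (2 * π * s ^ k) := by fun_prop
  have hsinc : Continuous fun s : ℝ =>
      ((k : ℝ) - 1) * (2 * k - 1) / (2 * k ^ 2) * sinc (π * s ^ k) ^ 2 := by fun_prop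
  have hFTC := intervalIntegral.integral_eq_sub_of_hasDerivAt_of_le hV
    (continuous_cosPowBoundary k).continuousOn
    (fun s hs => hasDerivAt_cosPowBoundary hk hs.1.ne')
    ((hcos.sub hsinc).intervalIntegrable 0 V)
  rw [intervalIntegral.integral_sub (hcos.intervalIntegrable 0 V) (hsinc.intervalIntegrable 0 V),
    intervalIntegral.integral_const_mul] at hFTC
  have hzero : cosPowBoundary k 0 = 0 := by simp [cosPowBoundary]
  linarith

lemma abs_sinc_le_inv_abs {x : ℝ} (hx : x ≠ 0) : |sinc x| ≤ |x|⁻¹ := by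
  rw [sinc_of_ne_zero hx, abs_div, div_eq_mul_inv]
  exact mul_le_of_le_one_left (by positivity) (abs_sin_le_one x)

lemma neg_inv_le_cosPowBoundary {k : ℕ} (hk : 2 ≤ k) {V : ℝ} (hV : 1 ≤ V) :
    -V⁻¹ ≤ cosPowBoundary k V := by
  have hk1 : (1 : ℝ) ≤ k := by exact_mod_cast (by omega : 1 ≤ k)
  have hsinc : |sinc (2 * π * V ^ k)| ≤ (V ^ 2)⁻¹ := by
    refine (abs_sinc_le_inv_abs (by positivity)).trans ?_
    rw [abs_of_pos (by positivity)]
    gcongr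
    calc V ^ 2 ≤ V ^ k := pow_le_pow_right₀ hV hk
      _ ≤ 2 * π * V ^ k := le_mul_of_one_le_left (by positivity) (by linarith [pi_gt_three])
  have hsquare : 0 ≤ (k - 1) / (2 * k ^ 2) * sinc (π * V ^ k) ^ 2 :=
    mul_nonneg (div_nonneg (by linarith) (by positivity)) (sq_nonneg _)
  calc -V⁻¹ = V * -(V ^ 2)⁻¹ := by field_simp
    _ ≤ V * (sinc (2 * π * V ^ k) / k) := by
      gcongr
      refine neg_le_of_abs_le ?_
      rw [abs_div, Nat.abs_cast]
      exact (div_le_self (abs_nonneg _) hk1).trans hsinc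
    _ ≤ cosPowBoundary k V := by
      rw [cosPowBoundary]
      gcongr
      linarith

lemma exists_le_integral_cos_pow {k : ℕ} (hk : 2 ≤ k) :
    ∃ c > 0, ∀ V : ℝ, 1 ≤ V → c - V⁻¹ ≤ ∫ s in (0 : ℝ)..V, cos (2 * π * s ^ k) := by
  have hk2 : (2 : ℝ) ≤ k := by exact_mod_cast hk
  have hcont : Continuous fun s : ℝ => sinc (π * s ^ k) ^ 2 := by fun_prop
  have hcoeff : 0 < ((k : ℝ) - 1) * (2 * k - 1) / (2 * k ^ 2) :=
    div_pos (mul_pos (by linarith) (by linarith)) (by positivity)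
  have hpos : 0 < ∫ s in (0 : ℝ)..1, sinc (π * s ^ k) ^ 2 :=
    intervalIntegral.integral_pos one_pos hcont.continuousOn (fun s _ => sq_nonneg _)
      ⟨0, by simp, by simp [show k ≠ 0 by omega]⟩
  refine ⟨_, mul_pos hcoeff hpos, fun V hV => ?_⟩
  have hmono : ∫ s in (0 : ℝ)..1, sinc (π * s ^ k) ^ 2 ≤ ∫ s in (0 : ℝ)..V, sinc (π * s ^ k) ^ 2 :=
    intervalIntegral.integral_mono_interval le_rfl zero_le_one hV
      (Filter.Eventually.of_forall fun s => sq_nonneg _) (hcont.intervalIntegrable 0 V)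
  rw [integral_cos_pow_eq (by omega) (by linarith)]
  linarith [mul_le_mul_of_nonneg_left hmono hcoeff.le, neg_inv_le_cosPowBoundary hk hV]

/-! ### Oscillatory integrals -/

lemma norm_fourierChar_add_sub_le (s t : ℝ) : ‖(𝐞 (s + t) - 𝐞 s : ℂ)‖ ≤ 2 * π * |t| := by
  have hfactor : (𝐞 (s + t) - 𝐞 s : ℂ) = 𝐞 s * (𝐞 t - 1) := by
    rw [AddChar.map_add_eq_mul, Circle.coe_mul]
    ring
  rw [hfactor, norm_mul, Circle.norm_coe, one_mul, fourierChar_apply, mul_comm _ Complex.I]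
  refine norm_exp_I_mul_ofReal_sub_one_le.trans_eq ?_
  rw [norm_mul, norm_of_nonneg two_pi_pos.le, norm_eq_abs]

lemma re_fourierChar (t : ℝ) : (𝐞 t : ℂ).re = cos (2 * π * t) := by
  rw [fourierChar_apply, Complex.exp_ofReal_mul_I_re]

lemma hasDerivAt_fourierChar_comp {φ : ℝ → ℝ} {φ' v : ℝ} (hφ : HasDerivAt φ φ' v) :
    HasDerivAt (fun t => (𝐞 (φ t) : ℂ)) (2 * π * Complex.I * φ' * 𝐞 (φ v)) v := by
  refine ((hasDerivAt_fourierChar (φ v)).scomp v hφ).congr_deriv ?_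
  rw [Complex.real_smul]
  ring

lemma norm_integral_smul_deriv_le_of_deriv_nonpos {E : Type*} [NormedAddCommGroup E]
    [NormedSpace ℝ E] [CompleteSpace E] {w w' : ℝ → ℝ} {g g' : ℝ → E} {a b M : ℝ} (hab : a ≤ b)
    (hw : ∀ v ∈ Icc a b, HasDerivAt w (w' v) v) (hw' : ∀ v ∈ Icc a b, w' v ≤ 0) (hwb : 0 ≤ w b)
    (hg : ∀ v ∈ Icc a b, HasDerivAt g (g' v) v) (hg' : IntervalIntegrable g' volume a b)
    (hM : ∀ v ∈ Icc a b, ‖g v‖ ≤ M) :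
    ‖∫ v in a..b, w v • g' v‖ ≤ 2 * M * w a := by
  have hw'_int : IntervalIntegrable w' volume a b := by
    simpa using (intervalIntegral.intervalIntegrable_deriv_of_nonneg (g := -w) (g' := -w')
      (fun v hv => (hw v (uIcc_of_le hab ▸ hv)).neg.continuousAt.continuousWithinAt)
      (by rw [min_eq_left hab, max_eq_right hab]
          exact fun v hv => (hw v (Ioo_subset_Icc_self hv)).neg)
      (by rw [min_eq_left hab, max_eq_right hab]
          exact fun v hv => neg_nonneg.mpr (hw' v (Ioo_subset_Icc_self hv)))).neg
  rw [← uIcc_of_le hab] at hw hg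
  have hdrop : ∫ v in a..b, -w' v = w a - w b := by
    rw [intervalIntegral.integral_neg, intervalIntegral.integral_eq_sub_of_hasDerivAt hw hw'_int,
      neg_sub]
  have hwa : 0 ≤ w a := by
    have := intervalIntegral.integral_nonneg (μ := volume) hab fun v hv => neg_nonneg.mpr (hw' v hv)
    linarith
  have hvar : ‖∫ v in a..b, w' v • g v‖ ≤ (w a - w b) * M := by
    rw [← hdrop, ← intervalIntegral.integral_mul_const]
    refine intervalIntegral.norm_integral_le_of_norm_le hab
      (Filter.Eventually.of_forall fun v hv => ?_) (hw'_int.neg.mul_const M)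
    have hv' := Ioc_subset_Icc_self hv
    rw [norm_smul, norm_of_nonpos (hw' v hv')]
    exact mul_le_mul_of_nonneg_left (hM v hv') (neg_nonneg.mpr (hw' v hv'))
  rw [intervalIntegral.integral_smul_deriv_eq_deriv_smul hw hg hw'_int hg']
  calc ‖w b • g b - w a • g a - ∫ v in a..b, w' v • g v‖
      ≤ ‖w b • g b‖ + ‖w a • g a‖ + ‖∫ v in a..b, w' v • g v‖ :=
        (norm_sub_le _ _).trans (add_le_add_left (norm_sub_le _ _) _)
    _ ≤ w b * M + w a * M + (w a - w b) * M := by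
        rw [norm_smul, norm_smul, norm_of_nonneg hwa, norm_of_nonneg hwb]
        gcongr
        · exact hM b (right_mem_Icc.mpr hab)
        · exact hM a (left_mem_Icc.mpr hab)
    _ = 2 * M * w a := by ring

lemma norm_integral_fourierChar_le_of_convex {φ φ' φ'' : ℝ → ℝ} {a b : ℝ} (hab : a ≤ b)
    (hφ : ∀ v ∈ Icc a b, HasDerivAt φ (φ' v) v) (hφ' : ∀ v ∈ Icc a b, HasDerivAt φ' (φ'' v) v)
    (hφ'' : ∀ v ∈ Icc a b, 0 ≤ φ'' v) (hpos : 0 < φ' a) :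
    ‖∫ v in a..b, (𝐞 (φ v) : ℂ)‖ ≤ (π * φ' a)⁻¹ := by
  have hmono : MonotoneOn φ' (Icc a b) :=
    monotoneOn_of_hasDerivWithinAt_nonneg (convex_Icc a b)
      (fun v hv => (hφ' v hv).continuousAt.continuousWithinAt)
      (fun v hv => (hφ' v (interior_subset hv)).hasDerivWithinAt)
      fun v hv => hφ'' v (interior_subset hv)
  have hφ'_pos : ∀ v ∈ Icc a b, 0 < φ' v := fun v hv =>
    hpos.trans_le (hmono (left_mem_Icc.mpr hab) hv hv.1)
  have hchar := fun v hv => hasDerivAt_fourierChar_comp (hφ v hv)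
  have hint : IntervalIntegrable (fun v => 2 * π * Complex.I * φ' v * 𝐞 (φ v)) volume a b := by
    refine ContinuousOn.intervalIntegrable fun v hv => ?_
    rw [uIcc_of_le hab] at hv
    exact ((continuousAt_const.mul (hφ' v hv).continuousAt.ofReal).mul
      (hchar v hv).continuousAt).continuousWithinAt
  -- Divide and multiply by the derivative of `φ`; by convexity its reciprocal is decreasing.
  have hbound := norm_integral_smul_deriv_le_of_deriv_nonpos (M := 1) hab
    (fun v hv => (hφ' v hv).inv (hφ'_pos v hv).ne')
    (fun v hv => div_nonpos_of_nonpos_of_nonneg (neg_nonpos.mpr (hφ'' v hv)) (sq_nonneg _))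
    (inv_nonneg.mpr (hφ'_pos b (right_mem_Icc.mpr hab)).le) hchar hint
    (fun v _ => (Circle.norm_coe _).le)
  have hcancel : ∫ v in a..b, (φ' v)⁻¹ • (2 * π * Complex.I * φ' v * 𝐞 (φ v) : ℂ) =
      2 * π * Complex.I * ∫ v in a..b, (𝐞 (φ v) : ℂ) := by
    rw [← intervalIntegral.integral_const_mul]
    refine intervalIntegral.integral_congr fun v hv => ?_
    have hne : (φ' v : ℂ) ≠ 0 := by exact_mod_cast (hφ'_pos v (uIcc_of_le hab ▸ hv)).ne'
    rw [Complex.real_smul, Complex.ofReal_inv]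
    field_simp
  have hnorm : ‖(2 * π * Complex.I : ℂ)‖ = 2 * π := by simp [pi_pos.le]
  simp only [Pi.inv_apply, hcancel, norm_mul _ (∫ v in a..b, (𝐞 (φ v) : ℂ)), hnorm] at hbound
  rw [mul_inv, ← div_eq_inv_mul, le_div_iff₀ pi_pos]
  linarith

lemma setIntegral_Icc_fin_two_eq {E : Type*} [NormedAddCommGroup E] [NormedSpace ℝ E]
    {f : (Fin 2 → ℝ) → E} (hf : Continuous f) {a b : Fin 2 → ℝ} (hab : a ≤ b) :
    ∫ ξ in Icc a b, f ξ = ∫ y in (a 1)..(b 1), ∫ t in (a 0)..(b 0), f ![t, y] := by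
  have hpre : Icc a b = (MeasurableEquiv.finTwoArrow : (Fin 2 → ℝ) ≃ᵐ ℝ × ℝ) ⁻¹'
      (Icc (a 0) (b 0) ×ˢ Icc (a 1) (b 1)) := by
    ext ξ
    simp [Pi.le_def, Fin.forall_fin_two, and_and_and_comm]
  have hpair (ξ : Fin 2 → ℝ) : ![ξ 0, ξ 1] = ξ := by
    ext i
    fin_cases i <;> rfl
  have hcont : Continuous fun p : ℝ × ℝ => f ![p.1, p.2] :=
    hf.comp (by fun_prop)
  have hprod := (volume_preserving_finTwoArrow ℝ).setIntegral_preimage_emb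
    (MeasurableEquiv.measurableEmbedding _) (fun p : ℝ × ℝ => f ![p.1, p.2])
    (Icc (a 0) (b 0) ×ˢ Icc (a 1) (b 1))
  have hint : IntegrableOn (fun p : ℝ × ℝ => f ![p.1, p.2]) (Icc (a 0) (b 0) ×ˢ Icc (a 1) (b 1)) :=
    hcont.continuousOn.integrableOn_compact (isCompact_Icc.prod isCompact_Icc)
  rw [IntegrableOn, Measure.volume_eq_prod, ← Measure.prod_restrict] at hint
  rw [← hpre, Measure.volume_eq_prod, ← Measure.prod_restrict, integral_prod_symm _ hint] at hprod
  simp only [MeasurableEquiv.finTwoArrow_apply, hpair] at hprod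
  simp only [hprod, intervalIntegral.integral_of_le (hab _), integral_Icc_eq_integral_Ioc]

lemma le_norm_integral_of_le_re_mul {g : ℝ → ℂ} {a b : ℝ} (hab : a ≤ b)
    (hg : IntervalIntegrable g volume a b) {u : ℂ} (hu : ‖u‖ ≤ 1) {m : ℝ}
    (h : ∀ y ∈ Icc a b, m ≤ (u * g y).re) : (b - a) * m ≤ ‖∫ y in a..b, g y‖ := by
  have hug := hg.const_mul u
  have hre : ∫ y in a..b, (u * g y).re = (u * ∫ y in a..b, g y).re := by
    rw [← intervalIntegral.integral_const_mul]
    exact Complex.reCLM.intervalIntegral_comp_comm hug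
  have hug_re : IntervalIntegrable (fun y => (u * g y).re) volume a b :=
    ⟨hug.1.re, hug.2.re⟩
  calc (b - a) * m = ∫ _ in a..b, m := by simp
    _ ≤ ∫ y in a..b, (u * g y).re :=
      intervalIntegral.integral_mono_on hab (by simp) hug_re h
    _ ≤ ‖u‖ * ‖∫ y in a..b, g y‖ :=
      hre.trans_le ((Complex.re_le_norm _).trans_eq (norm_mul _ _))
    _ ≤ ‖∫ y in a..b, g y‖ := mul_le_of_le_one_left (norm_nonneg _) hu

/-! ### The coefficient norm -/

lemma norm1_eq_sum_range {p : ℝ[X]} {d : ℕ} (hp : p.natDegree ≤ d) :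
    norm1 p = ∑ i ∈ Finset.range (d + 1), |p.coeff i| :=
  Polynomial.sum_over_range' p (fun _ => abs_zero) (d + 1) (Nat.lt_succ_of_le hp)

lemma norm1_nonneg (p : ℝ[X]) : 0 ≤ norm1 p :=
  Finset.sum_nonneg fun _ _ => abs_nonneg _

lemma abs_eval_le_norm1_mul_pow {p : ℝ[X]} {d : ℕ} (hp : p.natDegree ≤ d) {v V : ℝ}
    (hV : 1 ≤ V) (hv : |v| ≤ V) : |p.eval v| ≤ norm1 p * V ^ d := by
  rw [Polynomial.eval_eq_sum, Polynomial.sum, norm1, Finset.sum_mul]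
  refine (Finset.abs_sum_le_sum_abs _ _).trans (Finset.sum_le_sum fun i hi => ?_)
  rw [abs_mul, abs_pow]
  gcongr
  calc |v| ^ i ≤ V ^ i := by gcongr
    _ ≤ V ^ d := pow_le_pow_right₀ hV ((Polynomial.le_natDegree_of_mem_supp i hi).trans hp)

lemma norm1_derivative_le {p : ℝ[X]} {d : ℕ} (hp : p.natDegree ≤ d) :
    norm1 (derivative p) ≤ d * norm1 p := by
  rw [norm1_eq_sum_range (p.natDegree_derivative_le.trans ((Nat.sub_le _ _).trans hp)),
    norm1_eq_sum_range (hp.trans d.le_succ), Finset.sum_range_succ' _ (d + 1), mul_add,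
    Finset.mul_sum]
  refine le_add_of_le_of_nonneg (Finset.sum_le_sum fun i _ => ?_) (by positivity)
  rw [Polynomial.coeff_derivative, abs_mul, mul_comm, ← Nat.cast_succ, Nat.abs_cast]
  rcases lt_or_ge d (i + 1) with hdi | hdi
  · simp [Polynomial.coeff_eq_zero_of_natDegree_lt (hp.trans_lt hdi)]
  · gcongr

lemma norm1_comp_neg_X (p : ℝ[X]) : norm1 (p.comp (-X)) = norm1 p := by
  have hcoeff (i : ℕ) : |(p.comp (-X)).coeff i| = |p.coeff i| := by
    rw [← neg_one_mul, ← Polynomial.C_1, ← Polynomial.C_neg, Polynomial.comp_C_mul_X_coeff, abs_mul,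
      abs_pow, abs_neg, abs_one, one_pow, mul_one]
  rw [norm1_eq_sum_range le_rfl, norm1_eq_sum_range le_rfl, Polynomial.natDegree_comp]
  simp [hcoeff]

lemma norm1_neg (p : ℝ[X]) : norm1 (-p) = norm1 p := by
  simp [norm1]

lemma norm1_le_mul_of_abs_coeff_le {p : ℝ[X]} {k : ℕ} (hp : p.natDegree < k) {ε : ℝ}
    (hcoeff : ∀ i < k, |p.coeff i| ≤ ε) : norm1 p ≤ k * ε := by
  rw [norm1_eq_sum_range (Nat.le_sub_one_of_lt hp), Nat.sub_add_cancel (Nat.one_le_of_lt hp)]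
  refine (Finset.sum_le_card_nsmul _ _ ε fun i hi => hcoeff i (Finset.mem_range.mp hi)).trans_eq ?_
  simp

lemma coeff_X_sub_C_pow_of_le {R : Type*} [Ring R] (a : R) {m n : ℕ} (hmn : m ≤ n) :
    ((X - C a) ^ m).coeff n = if m = n then 1 else 0 := by
  rw [sub_eq_add_neg, ← Polynomial.C_neg, Polynomial.coeff_X_add_C_pow]
  rcases hmn.eq_or_lt with rfl | hlt
  · simp
  · rw [Nat.choose_eq_zero_of_lt hlt, if_neg hlt.ne, Nat.cast_zero, mul_zero]

/-! ### The one-dimensional model integral -/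

lemma continuous_fourierChar_pow_add (k : ℕ) (r : ℝ[X]) :
    Continuous fun v => (𝐞 (v ^ k + r.eval v) : ℂ) := by
  fun_prop

lemma norm_integral_fourierChar_neg (φ : ℝ → ℝ) (a b : ℝ) :
    ‖∫ v in a..b, (𝐞 (-φ v) : ℂ)‖ = ‖∫ v in a..b, (𝐞 (φ v) : ℂ)‖ := by
  simp only [AddChar.map_neg_eq_inv, Circle.coe_inv_eq_conj]
  rw [← Complex.norm_conj (∫ v in a..b, (𝐞 (φ v) : ℂ))]
  exact congrArg norm (Complex.conjLIE.toLinearIsometry.intervalIntegral_comp_comm _)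

lemma mul_pow_add_eval_nonneg {r : ℝ[X]} {n : ℕ} {C : ℝ} (hr : r.natDegree ≤ n)
    (hC : norm1 r ≤ C) {v : ℝ} (hv : 1 ≤ v) : 0 ≤ C * v ^ n + r.eval v := by
  have h := abs_eval_le_norm1_mul_pow hr hv (abs_of_pos (by linarith)).le
  have := mul_le_mul_of_nonneg_right hC (pow_nonneg (zero_le_one.trans hv) n)
  linarith [neg_abs_le (r.eval v)]

lemma norm_integral_fourierChar_pow_add_right_le {k : ℕ} (hk : 2 ≤ k) {r : ℝ[X]}
    (hr : r.natDegree < k) (hr1 : norm1 r ≤ 1) {V B : ℝ} (hV : 1 ≤ V) (hB : V ≤ B) :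
    ‖∫ v in V..B, (𝐞 (v ^ k + r.eval v) : ℂ)‖ ≤ (π * V)⁻¹ := by
  obtain ⟨n, rfl⟩ := Nat.exists_eq_add_of_le' hk
  set r' := derivative r
  have hdeg' : r'.natDegree ≤ n := r.natDegree_derivative_le.trans (by omega)
  have hnorm' : norm1 r' ≤ n + 1 := by
    have := norm1_derivative_le (Nat.le_of_lt_succ hr)
    push_cast at this
    nlinarith
  have hnorm'' : norm1 (derivative r') ≤ n * (n + 1) :=
    (norm1_derivative_le hdeg').trans (by gcongr)
  have hφ (v : ℝ) : HasDerivAt (fun t => t ^ (n + 2) + r.eval t)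
      ((n + 2) * v ^ (n + 1) + r'.eval v) v := by
    exact ((hasDerivAt_pow (n + 2) v).add (r.hasDerivAt v)).congr_deriv (by push_cast; rfl)
  have hφ' (v : ℝ) : HasDerivAt (fun t => (n + 2) * t ^ (n + 1) + r'.eval t)
      ((n + 2) * ((n + 1) * v ^ n) + (derivative r').eval v) v := by
    exact (((hasDerivAt_pow (n + 1) v).const_mul ((n : ℝ) + 2)).add (r'.hasDerivAt v)).congr_deriv
      (by push_cast; rfl)
  have hslope : V ≤ (n + 2) * V ^ (n + 1) + r'.eval V := by
    have hr'V := mul_pow_add_eval_nonneg hdeg' hnorm' hV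
    have hpow : V ^ n ≤ V ^ (n + 1) := pow_le_pow_right₀ hV n.le_succ
    have hself : V ≤ V ^ (n + 1) := le_self_pow₀ hV n.succ_ne_zero
    nlinarith
  have hconvex (v : ℝ) (hv : v ∈ Icc V B) :
      0 ≤ (n + 2) * ((n + 1) * v ^ n) + (derivative r').eval v := by
    have hv1 := hV.trans hv.1
    have hdeg'' := (r'.natDegree_derivative_le.trans (Nat.sub_le _ _)).trans hdeg'
    have := mul_pow_add_eval_nonneg hdeg'' hnorm'' hv1
    nlinarith [pow_pos (zero_lt_one.trans_le hv1) n]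
  refine (norm_integral_fourierChar_le_of_convex hB (fun v _ => hφ v) (fun v _ => hφ' v) hconvex
    (by linarith)).trans ?_
  gcongr

lemma norm_integral_fourierChar_pow_add_left_le {k : ℕ} (hk : 2 ≤ k) {r : ℝ[X]}
    (hr : r.natDegree < k) (hr1 : norm1 r ≤ 1) {V A : ℝ} (hV : 1 ≤ V) (hA : V ≤ A) :
    ‖∫ v in (-A)..(-V), (𝐞 (v ^ k + r.eval v) : ℂ)‖ ≤ (π * V)⁻¹ := by
  set s := r.comp (-X)
  have hs : s.natDegree < k := by simpa [s, Polynomial.natDegree_comp] using hr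
  have hs1 : norm1 s ≤ 1 := (norm1_comp_neg_X r).trans_le hr1
  rw [← intervalIntegral.integral_comp_neg fun v => (𝐞 (v ^ k + r.eval v) : ℂ)]
  rcases k.even_or_odd with heven | hodd
  · have hphase (v : ℝ) : (-v) ^ k + r.eval (-v) = v ^ k + s.eval v := by
      simp [s, heven.neg_pow]
    simp only [hphase]
    exact norm_integral_fourierChar_pow_add_right_le hk hs hs1 hV hA
  · -- The reflected phase is minus a phase of the same kind; conjugation removes the sign.
    have hphase (v : ℝ) : (-v) ^ k + r.eval (-v) = -(v ^ k + (-s).eval v) := by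
      simp [s, hodd.neg_pow, add_comm]
    simp only [hphase]
    rw [norm_integral_fourierChar_neg]
    exact norm_integral_fourierChar_pow_add_right_le hk (by rwa [Polynomial.natDegree_neg])
      (by rwa [norm1_neg]) hV hA

lemma integral_cos_pow_symm (k : ℕ) (V : ℝ) :
    ∫ s in (-V)..V, cos (2 * π * s ^ k) = 2 * ∫ s in (0 : ℝ)..V, cos (2 * π * s ^ k) := by
  have hcont : Continuous fun s : ℝ => cos (2 * π * s ^ k) := by fun_prop
  have heven (s : ℝ) : cos (2 * π * (-s) ^ k) = cos (2 * π * s ^ k) := by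
    rcases k.even_or_odd with hk | hk
    · rw [hk.neg_pow]
    · rw [hk.neg_pow, mul_neg, cos_neg]
  have hleft : ∫ s in (-V)..0, cos (2 * π * s ^ k) = ∫ s in (0 : ℝ)..V, cos (2 * π * s ^ k) := by
    have hneg := intervalIntegral.integral_comp_neg (a := 0) (b := V)
      fun s => cos (2 * π * s ^ k)
    simpa only [heven, neg_zero] using hneg.symm
  rw [← intervalIntegral.integral_add_adjacent_intervals (hcont.intervalIntegrable (-V) 0)
    (hcont.intervalIntegrable 0 V), hleft, ← two_mul]

lemma norm_integral_fourierChar_pow_add_sub_le {k : ℕ} {r : ℝ[X]} (hr : r.natDegree ≤ k)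
    {V : ℝ} (hV : 1 ≤ V) :
    ‖(∫ v in (-V)..V, (𝐞 (v ^ k + r.eval v) : ℂ)) - ∫ v in (-V)..V, (𝐞 (v ^ k) : ℂ)‖ ≤
      4 * π * norm1 r * V ^ (k + 1) := by
  have hpow : Continuous fun v : ℝ => (𝐞 (v ^ k) : ℂ) := by fun_prop
  rw [← intervalIntegral.integral_sub
    ((continuous_fourierChar_pow_add k r).intervalIntegrable _ _) (hpow.intervalIntegrable _ _)]
  refine (intervalIntegral.norm_integral_le_of_norm_le_const
    (C := 2 * π * (norm1 r * V ^ k)) fun v hv => ?_).trans_eq ?_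
  · rw [uIoc_of_le (by linarith)] at hv
    refine (norm_fourierChar_add_sub_le _ _).trans ?_
    gcongr
    exact abs_eval_le_norm1_mul_pow hr hV (abs_le.mpr ⟨hv.1.le, hv.2⟩)
  · rw [abs_of_nonneg (by linarith)]
    ring

lemma le_re_integral_fourierChar_pow_add {k : ℕ} (hk : 2 ≤ k) {r : ℝ[X]}
    (hr : r.natDegree < k) (hr1 : norm1 r ≤ 1) {V A B : ℝ} (hV : 1 ≤ V) (hA : V ≤ A)
    (hB : V ≤ B) :
    2 * (∫ s in (0 : ℝ)..V, cos (2 * π * s ^ k)) - 4 * π * norm1 r * V ^ (k + 1) - V⁻¹ ≤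
      (∫ v in (-A)..B, (𝐞 (v ^ k + r.eval v) : ℂ)).re := by
  have hint := fun a b => (continuous_fourierChar_pow_add k r).intervalIntegrable (μ := volume) a b
  have hpow : Continuous fun v : ℝ => (𝐞 (v ^ k) : ℂ) := by fun_prop
  have hcore : (∫ v in (-V)..V, (𝐞 (v ^ k) : ℂ)).re =
      2 * ∫ s in (0 : ℝ)..V, cos (2 * π * s ^ k) := by
    rw [← integral_cos_pow_symm]
    simpa only [Complex.reCLM_apply, re_fourierChar] using
      (Complex.reCLM.intervalIntegral_comp_comm (hpow.intervalIntegrable (-V) V)).symm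
  have hright := (Complex.abs_re_le_norm _).trans
    (norm_integral_fourierChar_pow_add_right_le hk hr hr1 hV hB)
  have hleft := (Complex.abs_re_le_norm _).trans
    (norm_integral_fourierChar_pow_add_left_le hk hr hr1 hV hA)
  have hmiddle := (Complex.abs_re_le_norm _).trans
    (norm_integral_fourierChar_pow_add_sub_le hr.le hV)
  rw [Complex.sub_re, hcore] at hmiddle
  have htails : 2 * (π * V)⁻¹ ≤ V⁻¹ := by
    rw [mul_inv, ← mul_assoc]
    refine mul_le_of_le_one_left (by positivity) ?_
    rw [← div_eq_mul_inv, div_le_one pi_pos]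
    exact two_le_pi
  rw [← intervalIntegral.integral_add_adjacent_intervals (hint (-A) V) (hint V B),
    ← intervalIntegral.integral_add_adjacent_intervals (hint (-A) (-V)) (hint (-V) V),
    Complex.add_re, Complex.add_re]
  linarith [neg_le_of_abs_le hright, neg_le_of_abs_le hleft, neg_le_of_abs_le hmiddle]

lemma exists_le_re_integral_fourierChar_pow_add {k : ℕ} (hk : 2 ≤ k) :
    ∃ c η V : ℝ, 0 < c ∧ 0 < η ∧ 1 ≤ V ∧ ∀ r : ℝ[X], r.natDegree < k → norm1 r ≤ η →
      ∀ A B, V ≤ A → V ≤ B → c ≤ (∫ v in (-A)..B, (𝐞 (v ^ k + r.eval v) : ℂ)).re := by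
  obtain ⟨c, hc, hcos⟩ := exists_le_integral_cos_pow hk
  set V := 1 + 3 / (c / 2) with hV_def
  have hV : 1 ≤ V := le_add_of_nonneg_right (by positivity)
  have hVinv : 3 * V⁻¹ ≤ c / 2 := by
    rw [← div_eq_mul_inv, div_le_comm₀ (by linarith) (by positivity)]
    linarith
  have hη : 0 < c / 2 / (4 * π * V ^ (k + 1)) := by positivity
  refine ⟨c, min 1 _, V, hc, lt_min one_pos hη, hV, fun r hr hr_small A B hA hB => ?_⟩
  have hr_mid : norm1 r * (4 * π * V ^ (k + 1)) ≤ c / 2 :=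
    (le_div_iff₀ (by positivity)).mp (hr_small.trans (min_le_right _ _))
  have hmodel :=
    le_re_integral_fourierChar_pow_add hk hr (hr_small.trans (min_le_left _ _)) hV hA hB
  linarith [hcos V hV]

/-! ### Slices of the phase -/

/-- The polynomial `P(u - θξ₂ + w, ξ₂; x)` in `ℝ[ξ₂][u]`, whose coefficients in `u` are the
polynomials `gam k x θ w`. -/
def shiftedPhase (k : ℕ) (x : Idx k → ℝ) (θ w : ℝ) : ℝ[X][X] :=
  ∑ β : Idx k, C (C (x β)) * (X - C (C θ * X - C w)) ^ (β.1.1 : ℕ) * C (X ^ (β.1.2 : ℕ))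

/-- The polynomial `P(u - θy + w, y; x)` in `u` alone, obtained from `shiftedPhase` by fixing
`ξ₂ = y`. -/
def slicePhase (k : ℕ) (x : Idx k → ℝ) (θ w y : ℝ) : ℝ[X] :=
  (shiftedPhase k x θ w).map (Polynomial.evalRingHom y)

/-- What remains of the slice phase, in the variable `v = L u`, after removing the leading
monomial `v ^ k` (the scale `L` is meant to satisfy `L ^ k = x₁`) and the slice-independent
constant `γ₀(0)`. -/
def sliceRemainder (k : ℕ) (x : Idx k → ℝ) (θ w L y : ℝ) : ℝ[X] :=
  (slicePhase k x θ w y).comp (C L⁻¹ * X) - X ^ k - C ((gam k x θ w 0).eval 0)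

lemma natDegree_shiftedPhase_le (k : ℕ) (x : Idx k → ℝ) (θ w : ℝ) :
    (shiftedPhase k x θ w).natDegree ≤ k := by
  refine Polynomial.natDegree_sum_le_of_forall_le _ _ fun β _ => ?_
  refine (Polynomial.natDegree_mul_C_le _ _).trans ((Polynomial.natDegree_C_mul_le _ _).trans ?_)
  rw [(Polynomial.monic_X_sub_C _).natDegree_pow, Polynomial.natDegree_X_sub_C, mul_one]
  exact (Nat.le_add_right _ _).trans β.2.2

lemma eq_idxTop_iff {k : ℕ} (hk : 1 ≤ k) (β : Idx k) : β = idxTop k hk ↔ (β.1.1 : ℕ) = k := by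
  refine ⟨fun h => h ▸ rfl, fun h => Subtype.ext (Prod.ext (Fin.ext h) (Fin.ext ?_))⟩
  have := β.2.2
  change (β.1.2 : ℕ) = 0
  omega

lemma gam_top {k : ℕ} (hk : 1 ≤ k) (x : Idx k → ℝ) (θ w : ℝ) :
    gam k x θ w k = C (x (idxTop k hk)) := by
  have hle (β : Idx k) : (β.1.1 : ℕ) ≤ k := (Nat.le_add_right _ _).trans β.2.2
  simp only [gam, Polynomial.finsetSum_coeff, Polynomial.coeff_mul_C, Polynomial.coeff_C_mul,
    coeff_X_sub_C_pow_of_le _ (hle _)]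
  rw [Finset.sum_eq_single (idxTop k hk)]
  · simp [idxTop]
  · simp +contextual [eq_idxTop_iff hk]
  · simp

lemma coeff_slicePhase (k : ℕ) (x : Idx k → ℝ) (θ w y : ℝ) (i : ℕ) :
    (slicePhase k x θ w y).coeff i = (gam k x θ w i).eval y :=
  Polynomial.coeff_map _ _

lemma natDegree_slicePhase_le (k : ℕ) (x : Idx k → ℝ) (θ w y : ℝ) :
    (slicePhase k x θ w y).natDegree ≤ k :=
  Polynomial.natDegree_map_le.trans (natDegree_shiftedPhase_le k x θ w)

lemma eval_slicePhase (k : ℕ) (x : Idx k → ℝ) (θ w t y : ℝ) :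
    (slicePhase k x θ w y).eval (t + θ * y - w) = Pphase k x ![t, y] := by
  simp [slicePhase, shiftedPhase, Pphase, Polynomial.map_sum, Polynomial.eval_finsetSum]

lemma coeff_sliceRemainder (k : ℕ) (x : Idx k → ℝ) (θ w L y : ℝ) (i : ℕ) :
    (sliceRemainder k x θ w L y).coeff i = (gam k x θ w i).eval y * L⁻¹ ^ i -
      (if i = k then 1 else 0) - if i = 0 then (gam k x θ w 0).eval 0 else 0 := by
  rw [sliceRemainder, Polynomial.coeff_sub, Polynomial.coeff_sub, Polynomial.comp_C_mul_X_coeff,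
    coeff_slicePhase, Polynomial.coeff_X_pow, Polynomial.coeff_C]

lemma natDegree_sliceRemainder_lt {k : ℕ} (hk : 1 ≤ k) {x : Idx k → ℝ} {θ w L y : ℝ} (hL : L ≠ 0)
    (hLx : L ^ k = x (idxTop k hk)) : (sliceRemainder k x θ w L y).natDegree < k := by
  refine Nat.lt_of_le_pred hk (Polynomial.natDegree_le_iff_coeff_eq_zero.mpr fun i hi => ?_)
  rcases (Nat.le_of_pred_lt hi).eq_or_lt with rfl | hlt
  · simp [coeff_sliceRemainder, gam_top hk, ← hLx, hL, Nat.ne_of_gt hk]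
  · rw [coeff_sliceRemainder, ← coeff_slicePhase, Polynomial.coeff_eq_zero_of_natDegree_lt
      ((natDegree_slicePhase_le k x θ w y).trans_lt hlt), if_neg hlt.ne', if_neg (by omega)]
    simp

lemma Pphase_eq_add_sliceRemainder (k : ℕ) (x : Idx k → ℝ) (θ w : ℝ) {L : ℝ} (hL : L ≠ 0)
    (t y : ℝ) :
    Pphase k x ![t, y] = (gam k x θ w 0).eval 0 + ((L * (t + θ * y - w)) ^ k +
      (sliceRemainder k x θ w L y).eval (L * (t + θ * y - w))) := by
  simp only [sliceRemainder, ← eval_slicePhase k x θ w t y, Polynomial.eval_sub,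
    Polynomial.eval_comp, Polynomial.eval_mul, Polynomial.eval_C, Polynomial.eval_X,
    Polynomial.eval_pow, inv_mul_cancel_left₀ hL]
  ring

lemma norm1_sliceRemainder_le {k : ℕ} (hk : 1 ≤ k) {θ w lam ε : ℝ} {x : Idx k → ℝ}
    (hx : x ∈ Omegaset k hk θ w lam ε) (hlam : 0 < lam) {L : ℝ} (hL : lam ≤ L)
    (hLx : L ^ k = x (idxTop k hk)) {y : ℝ} (hy : |y| ≤ 1) :
    norm1 (sliceRemainder k x θ w L y) ≤ k * ε := by
  have hL0 : 0 < L := hlam.trans_le hL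
  obtain ⟨-, -, hmiddle, hconst⟩ := hx
  have heval (p : ℝ[X]) : |p.eval y| ≤ norm1 p := by
    simpa using abs_eval_le_norm1_mul_pow le_rfl le_rfl hy
  refine norm1_le_mul_of_abs_coeff_le (natDegree_sliceRemainder_lt hk hL0.ne' hLx) fun i hi => ?_
  rw [coeff_sliceRemainder, if_neg hi.ne, sub_zero]
  rcases i.eq_zero_or_pos with rfl | hi0
  · simpa using (heval _).trans hconst
  · rw [if_neg hi0.ne', sub_zero, abs_mul, inv_pow, abs_inv, abs_of_pos (pow_pos hL0 i),
      ← div_eq_mul_inv, div_le_iff₀ (pow_pos hL0 i)]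
    have hε : 0 ≤ ε := (norm1_nonneg _).trans hconst
    calc |(gam k x θ w i).eval y| ≤ ε * lam ^ i :=
          (heval _).trans (hmiddle i hi0 (Nat.le_sub_one_of_lt hi))
      _ ≤ ε * L ^ i := by gcongr

lemma fourierChar_mul_integral_Pphase_eq (k : ℕ) (x : Idx k → ℝ) (θ w : ℝ) {L : ℝ} (hL : L ≠ 0)
    (y : ℝ) :
    𝐞 (-(gam k x θ w 0).eval 0) * ∫ t in (0 : ℝ)..1, (𝐞 (Pphase k x ![t, y]) : ℂ) =
      (L⁻¹ : ℝ) * ∫ v in (-(L * (w - θ * y)))..(L * (1 + θ * y - w)),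
        (𝐞 (v ^ k + (sliceRemainder k x θ w L y).eval v) : ℂ) := by
  have hphase (t : ℝ) : -(gam k x θ w 0).eval 0 + Pphase k x ![t, y] =
      (L * t + L * (θ * y - w)) ^ k +
        (sliceRemainder k x θ w L y).eval (L * t + L * (θ * y - w)) := by
    rw [Pphase_eq_add_sliceRemainder k x θ w hL, neg_add_cancel_left,
      show L * t + L * (θ * y - w) = L * (t + θ * y - w) by ring]
  rw [← intervalIntegral.integral_const_mul]
  simp only [← Circle.coe_mul, ← AddChar.map_add_eq_mul, hphase]
  rw [intervalIntegral.integral_comp_mul_add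
    (fun v => (𝐞 (v ^ k + (sliceRemainder k x θ w L y).eval v) : ℂ)) hL, Complex.real_smul]
  congr 3 <;> ring

lemma Eone_eq_iterated_integral (k : ℕ) (x : Idx k → ℝ) :
    Eone k x = ∫ y in (0 : ℝ)..1, ∫ t in (0 : ℝ)..1, (𝐞 (Pphase k x ![t, y]) : ℂ) := by
  have hcont : Continuous fun ξ => (𝐞 (Pphase k x ξ) : ℂ) := by
    unfold Pphase
    fun_prop
  have hFubini := setIntegral_Icc_fin_two_eq hcont zero_le_one
  simp only [Pi.zero_apply, Pi.one_apply] at hFubini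
  rw [← hFubini, Eone]
  refine integral_congr_ae (Filter.Eventually.of_forall fun ξ => ?_)
  simp only [fourierChar_apply]
  push_cast
  ring_nf

lemma le_norm_Eone_of_le_re_mul {k : ℕ} {x : Idx k → ℝ} {u : ℂ} (hu : ‖u‖ ≤ 1) {a : ℝ}
    (h : ∀ y ∈ Icc (0 : ℝ) 1, a ≤ (u * ∫ t in (0 : ℝ)..1, (𝐞 (Pphase k x ![t, y]) : ℂ)).re) :
    a ≤ ‖Eone k x‖ := by
  have hphase : Continuous fun p : ℝ × ℝ => (𝐞 (Pphase k x ![p.2, p.1]) : ℂ) := by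
    simp only [Pphase, Matrix.cons_val_zero, Matrix.cons_val_one]
    fun_prop
  rw [Eone_eq_iterated_integral]
  have hslice : Continuous fun y => ∫ t in (0 : ℝ)..1, (𝐞 (Pphase k x ![t, y]) : ℂ) :=
    intervalIntegral.continuous_parametric_intervalIntegral_of_continuous' hphase 0 1
  simpa using le_norm_integral_of_le_re_mul zero_le_one (hslice.intervalIntegrable 0 1) hu h

lemma exists_pow_eq_of_mem_Omegaset {k : ℕ} (hk : 1 ≤ k) {θ w lam ε : ℝ} {x : Idx k → ℝ}
    (hx : x ∈ Omegaset k hk θ w lam ε) (hlam : 0 ≤ lam) :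
    ∃ L, lam ≤ L ∧ L ≤ 2 * lam ∧ L ^ k = x (idxTop k hk) := by
  have hk0 : k ≠ 0 := by omega
  have hL : (x (idxTop k hk) ^ (k⁻¹ : ℝ)) ^ k = x (idxTop k hk) :=
    rpow_inv_natCast_pow ((pow_nonneg hlam k).trans hx.1) hk0
  refine ⟨_, ?_, ?_, hL⟩
  · refine le_of_pow_le_pow_left₀ hk0 (rpow_nonneg ((pow_nonneg hlam k).trans hx.1) _) ?_
    exact hx.1.trans_eq hL.symm
  · exact le_of_pow_le_pow_left₀ hk0 (by positivity) (hL.trans_le hx.2.1)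

/-- Lemma 6.2 (lower bound on the oscillatory integral on `Ω`): for every `k ≥ 2`
there are `ε₀ > 0`, `c > 0` and `λ₀ ≥ 1` such that for every `0 < ε ≤ ε₀`, every
`λ ≥ λ₀`, every `θ ∈ [0, 1/100]`, `w ∈ [1/4, 3/4]` and `x ∈ Ω(θ, w; λ, ε)`,
`|∫_{[0,1]²} e(P(ξ; x)) dξ| ≥ c/λ`. -/
theorem Omega_oscillatory_lower_bound (k : ℕ) (hk : 2 ≤ k) :
    ∃ ε₀ c lam₀ : ℝ, 0 < ε₀ ∧ 0 < c ∧ 1 ≤ lam₀ ∧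
      ∀ ε : ℝ, 0 < ε → ε ≤ ε₀ →
        ∀ lam : ℝ, lam₀ ≤ lam →
          ∀ θ ∈ Icc (0 : ℝ) (1 / 100), ∀ w ∈ Icc (1 / 4 : ℝ) (3 / 4),
            ∀ x ∈ Omegaset k (le_trans one_le_two hk) θ w lam ε,
              c / lam ≤ ‖Eone k x‖ := by
  obtain ⟨c, η, V, hc, hη, hV, hmodel⟩ := exists_le_re_integral_fourierChar_pow_add hk
  refine ⟨η / k, c / 2, 5 * V, by positivity, half_pos hc, by linarith, ?_⟩
  intro ε _ hε lam hlam θ hθ w hw x hx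
  have hlam0 : 0 < lam := by linarith
  obtain ⟨L, hlamL, hL, hLx⟩ := exists_pow_eq_of_mem_Omegaset _ hx hlam0.le
  have hL0 : 0 < L := hlam0.trans_le hlamL
  refine le_norm_Eone_of_le_re_mul (Circle.norm_coe (𝐞 (-(gam k x θ w 0).eval 0))).le fun y hy => ?_
  have hnorm : norm1 (sliceRemainder k x θ w L y) ≤ η :=
    (norm1_sliceRemainder_le _ hx hlam0 hlamL hLx ((abs_of_nonneg hy.1).trans_le hy.2)).trans
      ((le_div_iff₀' (by positivity)).mp hε)
  have hθy0 : 0 ≤ θ * y := mul_nonneg hθ.1 hy.1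
  have hθy1 : θ * y ≤ 1 / 100 := (mul_le_of_le_one_right hθ.1 hy.2).trans hθ.2
  have hleft : V ≤ L * (w - θ * y) := by nlinarith [hw.1]
  have hright : V ≤ L * (1 + θ * y - w) := by nlinarith [hw.2]
  rw [fourierChar_mul_integral_Pphase_eq k x θ w hL0.ne', Complex.re_ofReal_mul]
  calc c / 2 / lam = (2 * lam)⁻¹ * c := by field_simp
    _ ≤ L⁻¹ * c := by gcongr
    _ ≤ _ := by
      gcongr
      exact hmodel _ (natDegree_sliceRemainder_lt _ hL0.ne' hLx) hnorm _ _ hleft hright
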